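/- For the Grassmann algebra Λ = k[θ]/(θ²) over a field k of characteristic 0, the cyclic cohomology groups satisfy HC^{2n}(Λ) ≅ k² and HC^{2n+1}(Λ) ≅ k for all n ≥ 0, with explicit basis cocycles λ⁺_{2n}(a₀,…,a_{2n}) = a₀⁺⋯a_{2n}⁺ and λ⁻_n(a₀,…,a_n) = a₀⁻⋯a_n⁻, where a = a⁺·1 + a⁻·θ. -/

import Mathlib

/- STATEMENT 19: For the Grassmann algebra Λ = k[θ]/(θ²) (dual numbers,
θ = ε, |θ| = 1) over a field k of characteristic 0, the cyclic cohomology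
satisfies HC^{2n}(Λ) ≅ k² and HC^{2n+1}(Λ) ≅ k for all n ≥ 0, with basis
cocycles
  λ⁺_{2n}(a₀,…,a_{2n}) = a₀⁺ ⋯ a_{2n}⁺  and  λ⁻_m(a₀,…,a_m) = a₀⁻ ⋯ a_m⁻,
where a = a⁺·1 + a⁻·θ.  Concretely:
(i) λ⁺ (in even degrees) and λ⁻ (in all degrees) are graded-cyclic cochains
    annihilated by the graded Hochschild differential on C^•(Λ,Λ*);
(ii) modulo coboundaries of cyclic cochains, every cyclic cocycle of degree 2n
    is a unique combination c λ⁺ + d λ⁻, and of degree 2n+1 a unique multiple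
    of λ⁻.
Graded cyclicity and the differential carry the Koszul signs built from the
shifted degrees ā = |a| − 1, evaluated on tuples of homogeneous basis elements
(which determine the multilinear cochains). -/

open scoped BigOperators

variable {k : Type*} [Field k] [CharZero k]

/-- the homogeneous basis elements of `Λ`: `true ↦ θ`, `false ↦ 1`. -/
noncomputable def elt (b : Bool) : DualNumber k := if b then DualNumber.eps else 1

/-- the shifted degree `ā = |a| − 1 (mod 2)` of a basis element. -/
def sdeg (b : Bool) : ℕ := if b then 0 else 1

/-- the coordinate functional `a ↦ a⁺`. -/
def fstL : DualNumber k →ₗ[k] k where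
  toFun x := x.fst
  map_add' _ _ := rfl
  map_smul' _ _ := rfl

/-- the coordinate functional `a ↦ a⁻`. -/
def sndL : DualNumber k →ₗ[k] k where
  toFun x := x.snd
  map_add' _ _ := rfl
  map_smul' _ _ := rfl

/-- `λ⁺(a₀,…,a_{m−1}) = a₀⁺⋯a_{m−1}⁺` as a multilinear map in `m` arguments. -/
noncomputable def lamP (m : ℕ) :
    MultilinearMap k (fun _ : Fin m => DualNumber k) k :=
  (MultilinearMap.mkPiAlgebra k (Fin m) k).compLinearMap fun _ => fstL

/-- `λ⁻(a₀,…,a_{m−1}) = a₀⁻⋯a_{m−1}⁻` as a multilinear map in `m` arguments. -/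
noncomputable def lamM (m : ℕ) :
    MultilinearMap k (fun _ : Fin m => DualNumber k) k :=
  (MultilinearMap.mkPiAlgebra k (Fin m) k).compLinearMap fun _ => sndL

/-- graded cyclicity of a degree-`p` cochain (with `p+1` arguments):
`g(a₀,…,a_p) = (−1)^{ā₀(ā₁+⋯+ā_p)} g(a₁,…,a_p,a₀)` on homogeneous basis
tuples. -/
noncomputable def IsCyclicG (p : ℕ)
    (g : MultilinearMap k (fun _ : Fin (p + 1) => DualNumber k) k) : Prop :=
  ∀ ε : Fin (p + 1) → Bool,
    g (fun i => elt (ε i))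
      = (-1 : ℤ) ^ (sdeg (ε 0) *
            ∑ i : Fin (p + 1), if (i : ℕ) = 0 then 0 else sdeg (ε i)) •
          g (fun i => elt (ε (finRotate (p + 1) i)))

/-- the graded Hochschild differential on `C^p(Λ,Λ*) ≅ Hom(Λ^{⊗(p+1)}, k)`:
`(∂g)(a₀,…,a_{p+1}) = Σ_{j=0}^{p} (−1)^{ā₀+⋯+ā_j} g(a₀,…,a_j a_{j+1},…,a_{p+1})
  + (−1)^{(ā₀+1)(ā₁+⋯+ā_{p+1})} g(a₁,…,a_p, a_{p+1} a₀)`,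
evaluated on homogeneous basis tuples. -/
noncomputable def cyclicGD (p : ℕ)
    (h : MultilinearMap k (fun _ : Fin (p + 1) => DualNumber k) k)
    (ε : Fin (p + 2) → Bool) : k :=
  (∑ j : Fin (p + 1),
      (-1 : ℤ) ^ (∑ i : Fin (p + 2), if (i : ℕ) ≤ (j : ℕ) then sdeg (ε i) else 0)
        • h (fun i =>
            if i = j then (elt (ε i.castSucc) : DualNumber k) * elt (ε i.succ)
            else if (i : ℕ) < (j : ℕ) then elt (ε i.castSucc)
            else elt (ε i.succ)))
    + (-1 : ℤ) ^ ((sdeg (ε 0) + 1) *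
          ∑ i : Fin (p + 2), if (i : ℕ) = 0 then 0 else sdeg (ε i)) •
        h (fun i =>
          if (i : ℕ) = p then (elt (ε (Fin.last (p + 1))) : DualNumber k) * elt (ε 0)
          else elt (ε i.succ))

/-!
Values on tuples of basis elements turn a cyclic cochain into a function of words in `1` and `θ`
that is invariant under signed rotation. The operator that doubles a letter `1` preserves such
functions, and its anticommutator with the differential `∂` is `-N`, where `N` multiplies by the
number of cyclic blocks of `θ`s in a word. To see this, rotate a letter `1` to the front: the word
`1 :: v` then only sees the bar differential on `v`, for which the computation is an induction.

Hence `N` commutes with `∂`. As `N` vanishes only on the constant words `1⋯1` and `θ⋯θ`, and `∂g`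
vanishes on these for every cyclic `g`, a cyclic cocycle is a coboundary if and only if it vanishes
on the constant words. These two values are the coordinates with respect to `λ⁺` and `λ⁻`, and
signed rotation forces the first one to be zero when the word `1⋯1` has even length.
-/

namespace GrassmannCyclic

section Descents

variable {α : Type*}

section LT

variable [LT α] [DecidableLT α]

/-- The number of descents of a word, that is, of letters followed by a strictly smaller one. -/
def descents : List α → ℕ
  | a :: b :: v => (if b < a then 1 else 0) + descents (b :: v)
  | _ => 0

/-- The number of descents of a word read cyclically. For words in the letters `1 < θ` this is the
number of maximal blocks of `θ`s (zero for `θ⋯θ`). -/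
def cyclicDescents : List α → ℕ
  | [] => 0
  | a :: v => descents (a :: v ++ [a])

theorem descents_append_pair (u : List α) (c d : α) :
    descents (u ++ [c, d]) = descents (u ++ [c]) + if d < c then 1 else 0 := by
  induction u with
  | nil => simp [descents]
  | cons x u ih =>
    cases u with
    | nil => simp [descents]
    | cons y u => simpa [descents, add_assoc] using ih

theorem cyclicDescents_cons (a : α) (v : List α) :
    cyclicDescents (a :: v) = cyclicDescents (v ++ [a]) := by
  cases v with
  | nil => rfl
  | cons b v =>
    have := descents_append_pair (b :: v) a b
    simp only [cyclicDescents, List.cons_append, List.append_assoc, List.nil_append,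
      descents] at this ⊢
    omega

end LT

variable [LinearOrder α]

theorem isChain_le_of_descents_eq_zero {w : List α} (h : descents w = 0) :
    w.IsChain (· ≤ ·) := by
  induction w with
  | nil => exact .nil
  | cons a w ih =>
    cases w with
    | nil => exact .singleton a
    | cons b v =>
      simp only [descents, Nat.add_eq_zero_iff, ite_eq_right_iff, one_ne_zero, imp_false,
        not_lt] at h
      exact .cons_cons h.1 (ih h.2)

theorem eq_replicate_of_cyclicDescents_eq_zero {a : α} {v : List α}
    (h : cyclicDescents (a :: v) = 0) : a :: v = List.replicate (v.length + 1) a := by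
  have sorted := List.isChain_iff_pairwise.1 (isChain_le_of_descents_eq_zero h)
  simp only [List.cons_append, List.pairwise_cons, List.pairwise_append, List.mem_append,
    List.mem_singleton] at sorted
  rw [List.replicate_succ, List.eq_replicate_of_mem fun b hb =>
    le_antisymm (sorted.2.2.2 b hb a rfl) (sorted.1 b (.inl hb))]
  simp

end Descents

section Words

variable {R : Type*} [CommRing R]

/-- The sign `(-1)^ā` of a basis letter: `θ` is even and `1` is odd for the shifted degree. -/
def letterSign (a : Bool) : R := if a then 1 else -1

/-- The sign `(-1)^(ā₀ + ⋯ + āₙ)` of a word of basis letters. -/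
def wordSign (w : List Bool) : R := (w.map letterSign).prod

/-- The Koszul sign `(-1)^(ā w̄)` of moving the letter `a` past the word `w`. -/
def koszulSign (a : Bool) (w : List Bool) : R := if a then 1 else wordSign w

/-- The transpose of multiplying the first letter of a word by `a` from the left. A product `1·b`
or `a·1` of letters is encoded by `||`, and `θ·θ = 0` accounts for the case distinction. -/
def leftMul (a : Bool) : (List Bool → R) →ₗ[R] (List Bool → R) where
  toFun F
    | [] => 0
    | b :: v => if a && b then 0 else F ((a || b) :: v)
  map_add' F G := by ext (_ | ⟨b, v⟩) <;> simp [ite_add_ite]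
  map_smul' c F := by ext (_ | ⟨b, v⟩) <;> simp

/-- The transpose of multiplying the last letter of a word by `a` from the right. -/
def rightMul (a : Bool) : (List Bool → R) →ₗ[R] (List Bool → R) :=
  LinearMap.funLeft R R List.reverse ∘ₗ leftMul a ∘ₗ LinearMap.funLeft R R List.reverse

/-- The value at a given word of `bar`. -/
def barAt : List Bool → (List Bool → R) →ₗ[R] R
  | [] => 0
  | a :: v => (letterSign a : R) •
      (LinearMap.proj v ∘ₗ leftMul a + barAt v ∘ₗ LinearMap.funLeft R R (List.cons a))

/-- The bar differential, on functions of words: the signed sum over all ways to multiply two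
adjacent letters. -/
def bar : (List Bool → R) →ₗ[R] (List Bool → R) := LinearMap.pi barAt

/-- The value at a given word of `doubling`. -/
def doublingAt : List Bool → (List Bool → R) →ₗ[R] R
  | [] => 0
  | a :: v => (if a then 0 else -LinearMap.proj (false :: false :: v)) +
      (letterSign a : R) • doublingAt v ∘ₗ LinearMap.funLeft R R (List.cons a)

/-- The transpose of the odd derivation `1 ↦ -1·1`, `θ ↦ 0` of the tensor algebra: the signed sum
over all ways to double a letter `1`. It is the contracting homotopy of the cyclic complex. -/
def doubling : (List Bool → R) →ₗ[R] (List Bool → R) := LinearMap.pi doublingAt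

/-- The term of the Hochschild differential that multiplies the last letter by the first one. Its
sign involves `ā + 1`, the shifted degree of the other letter `!a`. -/
def wrapAt : List Bool → (List Bool → R) →ₗ[R] R
  | [] => 0
  | a :: v => (koszulSign (!a) v : R) • LinearMap.proj v ∘ₗ rightMul a

/-- The graded Hochschild differential `cyclicGD`, on functions of words of arbitrary length. -/
def hochschild : (List Bool → R) →ₗ[R] (List Bool → R) := bar + LinearMap.pi wrapAt

/-- The functions of words that are invariant under signed rotation, as in `IsCyclicG`. -/
def cyclicFunctions (R : Type*) [CommRing R] : Submodule R (List Bool → R) where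
  carrier := {f | ∀ a v, f (a :: v) = koszulSign a v * f (v ++ [a])}
  zero_mem' a v := by simp
  add_mem' hf hg a v := by simp only [Pi.add_apply, hf a v, hg a v, mul_add]
  smul_mem' c f hf a v := by simp only [Pi.smul_apply, hf a v, smul_eq_mul, mul_left_comm]

theorem letterSign_mul_self (a : Bool) : (letterSign a : R) * letterSign a = 1 := by
  cases a <;> simp [letterSign]

theorem wordSign_nil : (wordSign [] : R) = 1 := rfl

theorem wordSign_cons (a : Bool) (v : List Bool) :
    (wordSign (a :: v) : R) = letterSign a * wordSign v := List.prod_cons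

theorem wordSign_append (u v : List Bool) :
    (wordSign (u ++ v) : R) = wordSign u * wordSign v := by simp [wordSign]

theorem wordSign_mul_self (v : List Bool) : (wordSign v : R) * wordSign v = 1 := by
  induction v with
  | nil => simp [wordSign_nil]
  | cons a v ih => rw [wordSign_cons, mul_mul_mul_comm, letterSign_mul_self, ih, one_mul]

theorem koszulSign_mul_koszulSign_not (a : Bool) (w : List Bool) :
    (koszulSign a w : R) * koszulSign (!a) w = wordSign w := by
  cases a <;> simp [koszulSign]

@[simp] theorem leftMul_nil (a : Bool) (F : List Bool → R) : leftMul a F [] = 0 := rfl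

@[simp] theorem leftMul_cons (a b : Bool) (v : List Bool) (F : List Bool → R) :
    leftMul a F (b :: v) = if a && b then 0 else F ((a || b) :: v) := rfl

@[simp] theorem rightMul_nil (a : Bool) (F : List Bool → R) : rightMul a F [] = 0 := rfl

@[simp] theorem rightMul_append_singleton (a b : Bool) (v : List Bool) (F : List Bool → R) :
    rightMul a F (v ++ [b]) = if a && b then 0 else F (v ++ [a || b]) := by
  simp [rightMul, LinearMap.funLeft_apply]

@[simp] theorem bar_nil (F : List Bool → R) : bar F [] = 0 := rfl

@[simp] theorem bar_cons (a : Bool) (v : List Bool) (F : List Bool → R) :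
    bar F (a :: v) = letterSign a * (leftMul a F v + bar (fun x => F (a :: x)) v) := rfl

@[simp] theorem doubling_nil (F : List Bool → R) : doubling F [] = 0 := rfl

@[simp] theorem doubling_cons (a : Bool) (v : List Bool) (F : List Bool → R) :
    doubling F (a :: v) = (if a then 0 else -F (false :: false :: v))
      + letterSign a * doubling (fun x => F (a :: x)) v := by
  cases a <;> rfl

theorem hochschild_nil (F : List Bool → R) : hochschild F [] = 0 := add_zero 0

theorem hochschild_cons (a : Bool) (v : List Bool) (F : List Bool → R) :
    hochschild F (a :: v) = bar F (a :: v) + koszulSign (!a) v * rightMul a F v := rfl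

theorem leftMul_one {v : List Bool} (hv : v ≠ []) (F : List Bool → R) :
    leftMul false F v = F v := by
  obtain ⟨b, v, rfl⟩ := List.exists_cons_of_ne_nil hv
  simp

theorem rightMul_one {v : List Bool} (hv : v ≠ []) (F : List Bool → R) :
    rightMul false F v = F v := by
  obtain ⟨u, c, rfl⟩ := List.eq_nil_or_concat' v |>.resolve_left hv
  simp

theorem hochschild_one_cons (F : List Bool → R) (v : List Bool) :
    hochschild F (false :: v) = -bar (fun x => F (false :: x)) v := by
  cases v with
  | nil => simp [hochschild_cons]
  | cons b v => simp [hochschild_cons, rightMul_one, koszulSign, letterSign]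

theorem bar_append_singleton (a : Bool) (u : List Bool) (F : List Bool → R) :
    bar F (u ++ [a]) = bar (fun x => F (x ++ [a])) u + wordSign u * rightMul a F u := by
  induction u generalizing F with
  | nil => simp
  | cons x u ih =>
    rcases List.eq_nil_or_concat' u with rfl | ⟨u, c, rfl⟩
    · have := rightMul_append_singleton a x [] F
      simp_all [wordSign, Bool.and_comm, Bool.or_comm]
    · have merge : leftMul x F (u ++ [c] ++ [a]) =
          leftMul x (fun y => F (y ++ [a])) (u ++ [c]) := by cases u <;> simp
      have last := rightMul_append_singleton a c (x :: u) F
      rw [List.cons_append] at last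
      rw [List.cons_append, bar_cons, bar_cons, ih, merge, wordSign_cons, last,
        rightMul_append_singleton]
      simp only [List.cons_append]
      ring

theorem doubling_append_singleton (a : Bool) (u : List Bool) (F : List Bool → R) :
    doubling F (u ++ [a]) = doubling (fun x => F (x ++ [a])) u
      + wordSign u * if a then 0 else -F (u ++ [false, false]) := by
  induction u generalizing F with
  | nil => simp [wordSign_nil]
  | cons x u ih =>
    simp only [List.cons_append, doubling_cons, ih, wordSign_cons]
    ring

theorem leftMul_wordSign_mul (a : Bool) (F : List Bool → R) (v : List Bool) :
    leftMul a (fun x => wordSign x * F x) v = -(letterSign a * wordSign v * leftMul a F v) := by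
  cases v with
  | nil => simp
  | cons b v => cases a <;> cases b <;> simp [wordSign_cons, letterSign]

theorem bar_wordSign_mul (F : List Bool → R) (v : List Bool) :
    bar (fun x => wordSign x * F x) v = -(wordSign v * bar F v) := by
  induction v generalizing F with
  | nil => simp
  | cons a v ih =>
    have pull : (fun x => wordSign (a :: x) * F (a :: x)) =
        (letterSign a : R) • fun x => wordSign x * F (a :: x) := by
      ext x; simp [wordSign_cons, mul_assoc]
    rw [bar_cons, bar_cons, leftMul_wordSign_mul, pull, map_smul, Pi.smul_apply, ih, wordSign_cons,
      smul_eq_mul]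
    ring

theorem doubling_wordSign_mul (F : List Bool → R) (v : List Bool) :
    doubling (fun x => wordSign x * F x) v = -(wordSign v * doubling F v) := by
  induction v generalizing F with
  | nil => simp
  | cons a v ih =>
    have pull : (fun x => wordSign (a :: x) * F (a :: x)) =
        (letterSign a : R) • fun x => wordSign x * F (a :: x) := by
      ext x; simp [wordSign_cons, mul_assoc]
    rw [doubling_cons, doubling_cons, pull, map_smul, Pi.smul_apply, ih, smul_eq_mul]
    cases a <;>
      simp only [wordSign_cons, letterSign, Bool.false_eq_true, if_true, if_false] <;>
      ring

theorem bar_koszulSign_mul (a : Bool) (F : List Bool → R) (w : List Bool) :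
    bar (fun x => koszulSign a x * F x) w = letterSign a * koszulSign a w * bar F w := by
  cases a <;> simp [koszulSign, letterSign, bar_wordSign_mul]

theorem doubling_koszulSign_mul (a : Bool) (F : List Bool → R) (w : List Bool) :
    doubling (fun x => koszulSign a x * F x) w = letterSign a * koszulSign a w * doubling F w := by
  cases a <;> simp [koszulSign, letterSign, doubling_wordSign_mul]

theorem leftMul_cons_of_mem_cyclicFunctions {f : List Bool → R} (hf : f ∈ cyclicFunctions R)
    (a b : Bool) (v : List Bool) :
    letterSign a * leftMul a f (b :: v) =
      koszulSign a (b :: v) * koszulSign (!b) (v ++ [a]) * rightMul b f (v ++ [a]) := by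
  have signs := wordSign_mul_self (R := R) v
  rw [leftMul_cons, rightMul_append_singleton, hf]
  cases a <;> cases b <;>
    simp only [letterSign, koszulSign, wordSign_cons, wordSign_append, wordSign_nil,
      Bool.false_eq_true, ↓reduceIte, Bool.and_self, Bool.or_self, Bool.and_true, Bool.or_true,
      Bool.and_false, Bool.or_false, Bool.not_false, Bool.not_true] <;>
    grind

theorem hochschild_mem_cyclicFunctions {f : List Bool → R} (hf : f ∈ cyclicFunctions R) :
    hochschild f ∈ cyclicFunctions R := by
  rintro a (_ | ⟨b, v⟩)
  · simp [koszulSign, wordSign_nil]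
  have rotated : (fun x => f (a :: x)) = fun x => koszulSign a x * f (x ++ [a]) :=
    funext (hf a)
  have inner := bar_koszulSign_mul a (fun x => f (x ++ [a])) (b :: v)
  have split := bar_append_singleton a (b :: v) f
  have signs := koszulSign_mul_koszulSign_not (R := R) a (b :: v)
  have square := letterSign_mul_self (R := R) a
  have square' : (koszulSign a (b :: v) : R) * koszulSign a (b :: v) = 1 := by
    cases a <;> simp [koszulSign, wordSign_mul_self]
  rw [← rotated] at inner
  rw [hochschild_cons, bar_cons, mul_add, leftMul_cons_of_mem_cyclicFunctions hf, inner,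
    List.cons_append, hochschild_cons, ← List.cons_append, split, ← signs]
  grind

theorem doubling_mem_cyclicFunctions {f : List Bool → R} (hf : f ∈ cyclicFunctions R) :
    doubling f ∈ cyclicFunctions R := by
  intro a w
  have rotated : (fun x => f (a :: x)) = fun x => koszulSign a x * f (x ++ [a]) :=
    funext (hf a)
  have square := letterSign_mul_self (R := R) a
  have doubled : (if a then 0 else -f (false :: false :: w)) =
      koszulSign a w * (wordSign w * if a then 0 else -f (w ++ [false, false])) := by
    cases a
    · simp [hf false (false :: w), hf false (w ++ [false]), koszulSign, wordSign_cons,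
        wordSign_append, wordSign_nil, letterSign]
    · simp
  rw [doubling_cons, rotated, doubling_koszulSign_mul, doubling_append_singleton, doubled]
  grind

theorem leftMul_bar (a : Bool) (F : List Bool → R) (v : List Bool) :
    leftMul a (bar F) v = -(letterSign a * bar (leftMul a F) v) := by
  rcases v with _ | ⟨b, _ | ⟨c, v⟩⟩
  · simp
  · cases a <;> cases b <;> simp
  · cases a <;> cases b <;> cases c <;> simp [letterSign, ← Pi.zero_def]

theorem bar_bar (F : List Bool → R) : bar (bar F) = 0 := by
  ext v
  induction v generalizing F with
  | nil => rfl
  | cons a v ih =>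
    have tail : (fun x => bar F (a :: x)) =
        (letterSign a : R) • (leftMul a F + bar fun x => F (a :: x)) := rfl
    rw [bar_cons, leftMul_bar, tail, map_smul, map_add, Pi.smul_apply, Pi.add_apply, ih]
    simp

/-- Here `v` is the rest of a cyclic word `1 :: v`, read up to its initial `1`. -/
theorem bar_doubling_add_doubling_bar {v : List Bool} (hv : v ≠ []) (F : List Bool → R) :
    bar (doubling F) v + doubling (bar F) v = (1 - (descents (v ++ [false]) : R)) * F v := by
  induction v generalizing F with
  | nil => contradiction
  | cons a v ih =>
    rcases v with _ | ⟨b, v⟩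
    · cases a <;> simp [letterSign, descents]
    have tail := ih (by simp) fun x => F (a :: x)
    have bar_tail : (fun x => bar F (a :: x)) =
        (letterSign a : R) • (leftMul a F + bar fun x => F (a :: x)) := rfl
    have doubling_tail : (fun x => doubling F (a :: x)) =
        (if a then (0 : R) else -1) • (fun x => F (false :: false :: x)) +
          (letterSign a : R) • doubling fun x => F (a :: x) := by
      ext x; cases a <;> simp
    rw [bar_cons, doubling_cons, bar_tail, doubling_tail]
    simp only [map_add, map_smul, Pi.add_apply, Pi.smul_apply, List.cons_append, descents,
      Nat.cast_add] at tail ⊢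
    clear ih
    cases a <;> cases b <;>
      simp only [bar_cons, doubling_cons, leftMul_cons, letterSign, Bool.lt_iff,
        Bool.false_eq_true, Bool.true_eq_false, ↓reduceIte, Bool.and_self, Bool.or_self,
        Bool.and_true, Bool.or_true, Bool.and_false, Bool.or_false, and_false, and_true,
        Nat.cast_zero, Nat.cast_one, smul_eq_mul, ← Pi.zero_def, map_zero, Pi.zero_apply]
        at tail ⊢ <;>
      linear_combination tail

theorem eq_zero_of_mem_cyclicFunctions {f : List Bool → R} (hf : f ∈ cyclicFunctions R)
    (h_one : ∀ v, f (false :: v) = 0) (h_theta : ∀ n, f (List.replicate n true) = 0) : f = 0 := by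
  have rotate : ∀ u v, f (u ++ false :: v) = 0 := by
    intro u
    induction u with
    | nil => exact h_one
    | cons a u ih => intro v; simp [hf a, ih]
  ext w
  by_cases hw : false ∈ w
  · obtain ⟨u, v, rfl⟩ := List.append_of_mem hw
    exact rotate u v
  · have : ∀ b ∈ w, b = true := fun b hb => by cases b <;> trivial
    rw [List.eq_replicate_of_mem this]
    exact h_theta _

theorem bar_replicate_true (F : List Bool → R) (n : ℕ) : bar F (List.replicate n true) = 0 := by
  induction n generalizing F with
  | zero => rfl
  | succ n ih => cases n <;> simp_all [List.replicate_succ]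

theorem hochschild_replicate_true (F : List Bool → R) (n : ℕ) :
    hochschild F (List.replicate n true) = 0 := by
  rcases n with _ | _ | n
  · exact hochschild_nil F
  · simp [hochschild_cons]
  · rw [List.replicate_succ, hochschild_cons, ← List.replicate_succ, bar_replicate_true,
      List.replicate_succ', rightMul_append_singleton]
    simp

theorem doubling_replicate_true (F : List Bool → R) (n : ℕ) :
    doubling F (List.replicate n true) = 0 := by
  induction n generalizing F with
  | zero => rfl
  | succ n ih => simp [List.replicate_succ, ih]

theorem cyclicDescents_replicate (a : Bool) (n : ℕ) :
    cyclicDescents (List.replicate n a) = 0 := by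
  have constant : ∀ n, descents (List.replicate n a) = 0 := fun n => by
    induction n with
    | zero => rfl
    | succ n ih => cases n <;> simp_all [List.replicate_succ, descents]
  cases n with
  | zero => rfl
  | succ n =>
    rw [List.replicate_succ, cyclicDescents, ← List.replicate_succ, ← List.replicate_succ']
    exact constant _

/-- The number of blocks of `θ`s, as a scalar-valued function of words. -/
def blockCount (R : Type*) [CommRing R] (w : List Bool) : R := cyclicDescents w

theorem mul_mem_cyclicFunctions {c f : List Bool → R} (hc : ∀ a v, c (a :: v) = c (v ++ [a]))
    (hf : f ∈ cyclicFunctions R) : c * f ∈ cyclicFunctions R := by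
  intro a v
  rw [Pi.mul_apply, Pi.mul_apply, hc, hf a v, mul_left_comm]

theorem blockCount_cons (a : Bool) (v : List Bool) :
    blockCount R (a :: v) = blockCount R (v ++ [a]) := congrArg Nat.cast (cyclicDescents_cons a v)

theorem hochschild_hochschild {f : List Bool → R} (hf : f ∈ cyclicFunctions R) :
    hochschild (hochschild f) = 0 := by
  refine eq_zero_of_mem_cyclicFunctions
    (hochschild_mem_cyclicFunctions (hochschild_mem_cyclicFunctions hf)) (fun v => ?_)
    (hochschild_replicate_true _)
  have inner : (fun x => hochschild f (false :: x)) = -bar fun x => f (false :: x) :=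
    funext (hochschild_one_cons f)
  rw [hochschild_one_cons, inner, map_neg, bar_bar]
  simp

theorem hochschild_doubling_add_doubling_hochschild {f : List Bool → R}
    (hf : f ∈ cyclicFunctions R) :
    hochschild (doubling f) + doubling (hochschild f) = -(blockCount R * f) := by
  rw [← sub_eq_zero]
  refine eq_zero_of_mem_cyclicFunctions (Submodule.sub_mem _ (Submodule.add_mem _
    (hochschild_mem_cyclicFunctions (doubling_mem_cyclicFunctions hf))
    (doubling_mem_cyclicFunctions (hochschild_mem_cyclicFunctions hf)))
    (Submodule.neg_mem _ (mul_mem_cyclicFunctions blockCount_cons hf))) (fun v => ?_) fun n => ?_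
  · rcases eq_or_ne v [] with rfl | hv
    · simp [hochschild_one_cons, blockCount, cyclicDescents, descents]
    have diagonal := bar_doubling_add_doubling_bar hv fun x => f (false :: x)
    have doubling_tail : (fun x => doubling f (false :: x)) =
        -(fun x => f (false :: false :: x)) - doubling fun x => f (false :: x) := by
      ext x; simp [letterSign, sub_eq_add_neg]
    have hochschild_tail : (fun x => hochschild f (false :: x)) = -bar fun x => f (false :: x) :=
      funext (hochschild_one_cons f)
    have count : cyclicDescents (false :: v) = descents (v ++ [false]) := by
      obtain ⟨b, v, rfl⟩ := List.exists_cons_of_ne_nil hv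
      simp [cyclicDescents, descents, Bool.lt_iff]
    rw [Pi.sub_apply, Pi.add_apply, hochschild_one_cons, doubling_cons, doubling_tail,
      hochschild_tail, hochschild_one_cons]
    simp only [map_sub, map_neg, Pi.sub_apply, Pi.neg_apply, Pi.mul_apply, bar_cons,
      leftMul_one hv, blockCount, count, letterSign, Bool.false_eq_true, if_false]
    linear_combination diagonal
  · simp [hochschild_replicate_true, doubling_replicate_true, blockCount, cyclicDescents_replicate]

theorem hochschild_blockCount_mul {f : List Bool → R} (hf : f ∈ cyclicFunctions R) :
    hochschild (blockCount R * f) = blockCount R * hochschild f := by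
  have homotopy := hochschild_doubling_add_doubling_hochschild hf
  have homotopy' :=
    hochschild_doubling_add_doubling_hochschild (hochschild_mem_cyclicFunctions hf)
  rw [hochschild_hochschild hf, map_zero, add_zero] at homotopy'
  rw [← neg_inj, ← map_neg, ← homotopy, map_add,
    hochschild_hochschild (doubling_mem_cyclicFunctions hf), zero_add, homotopy']

theorem bar_replicate_one {F : List Bool → R} {n : ℕ} (hF : F (List.replicate n false) = 0) :
    bar F (List.replicate (n + 1) false) = 0 := by
  induction n generalizing F with
  | zero => simp
  | succ n ih =>
    rw [List.replicate_succ, bar_cons, ih (by rwa [← List.replicate_succ]), leftMul_one (by simp),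
      hF]
    simp

theorem bar_eq_zero_of_length {F : List Bool → R} {w : List Bool}
    (hF : ∀ x, x.length + 1 = w.length → F x = 0) : bar F w = 0 := by
  induction w generalizing F with
  | nil => rfl
  | cons a v ih =>
    rw [bar_cons, ih fun x hx => hF _ (by simpa using hx)]
    rcases v with _ | ⟨b, v⟩
    · simp
    · simp [hF ((a || b) :: v) (by simp)]

theorem hochschild_eq_zero_of_length {F : List Bool → R} {w : List Bool}
    (hF : ∀ x, x.length + 1 = w.length → F x = 0) : hochschild F w = 0 := by
  rcases w with _ | ⟨a, v⟩
  · exact hochschild_nil F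
  rw [hochschild_cons, bar_eq_zero_of_length hF]
  rcases List.eq_nil_or_concat' v with rfl | ⟨u, b, rfl⟩
  · simp
  · simp [hF (u ++ [a || b]) (by simp)]

end Words

section CharZero

theorem apply_replicate_one_of_odd {f : List Bool → k} (hf : f ∈ cyclicFunctions k) {n : ℕ}
    (hn : Odd n) : f (List.replicate (n + 1) false) = 0 := by
  have rotate := hf false (List.replicate n false)
  rw [← List.replicate_succ, ← List.replicate_succ'] at rotate
  simpa [koszulSign, wordSign, letterSign, hn.neg_one_pow, self_eq_neg] using rotate

theorem hochschild_replicate {f : List Bool → k} (hf : f ∈ cyclicFunctions k) (n : ℕ) (b : Bool) :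
    hochschild f (List.replicate n b) = 0 := by
  cases b
  · rcases n with _ | n
    · exact hochschild_nil f
    rcases n.even_or_odd with even | odd
    · rcases n with _ | n
      · simp [hochschild_cons]
      have odd : Odd n := by simpa [Nat.even_add_one] using even
      rw [List.replicate_succ, hochschild_one_cons, bar_replicate_one, neg_zero]
      exact apply_replicate_one_of_odd hf odd
    · exact apply_replicate_one_of_odd (hochschild_mem_cyclicFunctions hf) odd
  · exact hochschild_replicate_true f n

theorem exists_eq_replicate_of_blockCount_eq_zero {w : List Bool} (h : blockCount k w = 0) :
    ∃ n b, w = List.replicate n b := by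
  cases w with
  | nil => exact ⟨0, true, rfl⟩
  | cons a v => exact ⟨_, _, eq_replicate_of_cyclicDescents_eq_zero (Nat.cast_eq_zero.1 h)⟩

theorem hochschild_eq_zero_of_blockCount_mul {f : List Bool → k} (hf : f ∈ cyclicFunctions k)
    (h : hochschild (blockCount k * f) = 0) : hochschild f = 0 := by
  ext w
  rw [hochschild_blockCount_mul hf] at h
  rcases mul_eq_zero.1 (congrFun h w) with constant | closed
  · obtain ⟨n, b, rfl⟩ := exists_eq_replicate_of_blockCount_eq_zero constant
    exact hochschild_replicate hf n b
  · exact closed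

theorem exists_hochschild_eq {f : List Bool → k} (hf : f ∈ cyclicFunctions k)
    (closed : hochschild f = 0) (constant : ∀ n b, f (List.replicate n b) = 0) :
    ∃ h ∈ cyclicFunctions k, hochschild h = f := by
  set g := (blockCount k)⁻¹ * f with hg
  have g_mem : g ∈ cyclicFunctions k := mul_mem_cyclicFunctions
    (fun a v => congrArg Inv.inv (blockCount_cons a v)) hf
  have mul_g : blockCount k * g = f := by
    ext w
    by_cases hw : blockCount k w = 0
    · obtain ⟨n, b, rfl⟩ := exists_eq_replicate_of_blockCount_eq_zero hw
      simp [hg, constant]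
    · simp [hg, hw]
  have g_closed : hochschild g = 0 :=
    hochschild_eq_zero_of_blockCount_mul g_mem (by rw [mul_g, closed])
  have homotopy := hochschild_doubling_add_doubling_hochschild g_mem
  rw [g_closed, map_zero, add_zero, mul_g] at homotopy
  exact ⟨-doubling g, Submodule.neg_mem _ (doubling_mem_cyclicFunctions g_mem),
    by rw [map_neg, homotopy, neg_neg]⟩

end CharZero
section Tuples

variable {α : Type*}

theorem ofFn_contractNth_zero (op : α → α → α) {p : ℕ} (ε : Fin (p + 2) → α) :
    List.ofFn (Fin.contractNth 0 op ε) = op (ε 0) (ε 1) :: List.ofFn fun i => ε i.succ.succ := by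
  rw [List.ofFn_succ]
  simp [Fin.contractNth]

theorem ofFn_contractNth_succ (op : α → α → α) {p : ℕ} (ε : Fin (p + 3) → α)
    (j : Fin (p + 2)) : List.ofFn (Fin.contractNth j.succ op ε) =
      ε 0 :: List.ofFn (Fin.contractNth j op fun i => ε i.succ) := by
  rw [List.ofFn_succ]
  simp [Fin.contractNth]

theorem ofFn_comp_finRotate {p : ℕ} (ε : Fin (p + 1) → α) :
    List.ofFn (fun i => ε (finRotate (p + 1) i)) = (List.ofFn fun i => ε i.succ) ++ [ε 0] := by
  rw [List.ofFn_succ', List.concat_eq_append, finRotate_last]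
  congr 2
  funext i
  exact congrArg ε (finRotate_of_lt i.2)

theorem exists_ofFn_eq {w : List α} {m : ℕ} (hw : w.length = m) :
    ∃ ε : Fin m → α, List.ofFn ε = w := by
  subst hw
  exact ⟨w.get, w.ofFn_get⟩

end Tuples

section Signs

variable {R : Type*} [CommRing R]

theorem neg_one_pow_sdeg (b : Bool) : (-1 : R) ^ sdeg b = letterSign b := by
  cases b <;> simp [sdeg, letterSign]

theorem neg_one_pow_sum_sdeg {n : ℕ} (ε : Fin n → Bool) :
    (-1 : R) ^ ∑ i, sdeg (ε i) = wordSign (List.ofFn ε) := by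
  simp [wordSign, List.map_ofFn, List.prod_ofFn, ← Finset.prod_pow_eq_pow_sum, neg_one_pow_sdeg]

theorem neg_one_pow_mul_sum_sdeg_tail {p : ℕ} (e : ℕ) (ε : Fin (p + 1) → Bool) :
    (((-1 : ℤ) ^ (e * ∑ i : Fin (p + 1), if (i : ℕ) = 0 then 0 else sdeg (ε i)) : ℤ) : R) =
      wordSign (List.ofFn fun i => ε i.succ) ^ e := by
  rw [Fin.sum_univ_succ, mul_comm, pow_mul]
  push_cast
  simp [neg_one_pow_sum_sdeg]

theorem sum_contractNth_eq_bar {p : ℕ} (ε : Fin (p + 2) → Bool) (F : List Bool → R) :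
    ∑ j : Fin (p + 1),
      (-1 : R) ^ (∑ i : Fin (p + 2), if (i : ℕ) ≤ (j : ℕ) then sdeg (ε i) else 0) *
        (if ε j.castSucc && ε j.succ then 0 else
          F (List.ofFn (Fin.contractNth j.castSucc (· || ·) ε))) = bar F (List.ofFn ε) := by
  induction p generalizing F with
  | zero => simp [neg_one_pow_sdeg, Fin.contractNth]
  | succ p ih =>
    have tail := ih (fun i => ε i.succ) fun x => F (ε 0 :: x)
    rw [Fin.sum_univ_succ, List.ofFn_succ (f := ε), bar_cons, mul_add, ← tail, Finset.mul_sum]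
    congr 1
    · rw [Fin.castSucc_zero, ofFn_contractNth_zero, Fin.sum_univ_succ, List.ofFn_succ]
      simp [neg_one_pow_sdeg]
    · refine Finset.sum_congr rfl fun j _ => ?_
      rw [← Fin.succ_castSucc, ofFn_contractNth_succ, Fin.sum_univ_succ, pow_add]
      simp [neg_one_pow_sdeg, mul_assoc]

end Signs

section Cochains

variable {K : Type*} [Field K]

theorem elt_mul_elt (a b : Bool) :
    (elt a * elt b : DualNumber K) = if a && b then 0 else elt (a || b) := by
  cases a <;> cases b <;> simp [elt]

theorem fstL_elt (b : Bool) : fstL (elt b : DualNumber K) = if b = false then 1 else 0 := by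
  cases b <;> rfl

theorem sndL_elt (b : Bool) : sndL (elt b : DualNumber K) = if b = true then 1 else 0 := by
  cases b <;> rfl

/-- The basis `(1, θ)` of the Grassmann algebra. -/
noncomputable def eltBasis : Module.Basis Bool K (DualNumber K) :=
  .ofEquivFun
    { toFun x b := if b then sndL x else fstL x
      invFun c := c false • elt false + c true • elt true
      map_add' x y := by ext b; cases b <;> simp
      map_smul' c x := by ext b; cases b <;> simp
      left_inv x := by ext <;> simp [elt] <;> rfl
      right_inv c := by ext b; cases b <;> simp [fstL_elt, sndL_elt] }

theorem eltBasis_apply (b : Bool) : (eltBasis b : DualNumber K) = elt b := by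
  cases b <;> simp [eltBasis, Module.Basis.coe_ofEquivFun]

/-- A function of words restricting to the values of a cochain on tuples of basis elements. -/
def Represents {m : ℕ} (f : List Bool → K)
    (g : MultilinearMap K (fun _ : Fin m => DualNumber K) K) : Prop :=
  ∀ ε : Fin m → Bool, f (List.ofFn ε) = g fun i => elt (ε i)

theorem exists_represents (m : ℕ) (f : List Bool → K) :
    ∃ g : MultilinearMap K (fun _ : Fin m => DualNumber K) K, Represents f g := by
  refine ⟨∑ ε : Fin m → Bool, f (List.ofFn ε) •
    (MultilinearMap.mkPiAlgebra K (Fin m) K).compLinearMap fun i => if ε i then sndL else fstL,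
    fun ε => ?_⟩
  have dual (a b : Bool) : (if a then sndL else fstL : DualNumber K →ₗ[K] K) (elt b) =
      if a = b then 1 else 0 := by
    cases a <;> cases b <;> simp [fstL_elt, sndL_elt]
  simp only [sum_apply, smul_apply, MultilinearMap.compLinearMap_apply,
    MultilinearMap.mkPiAlgebra_apply, dual, Fintype.prod_boole, ← funext_iff]
  simp

variable {p : ℕ} {f : List Bool → K} {g : MultilinearMap K (fun _ : Fin (p + 1) => DualNumber K) K}

theorem Represents.apply_mul (hfg : Represents f g) (ε : Fin (p + 2) → Bool) (j : Fin (p + 1)) :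
    (g fun i => if i = j then elt (ε i.castSucc) * elt (ε i.succ)
      else if (i : ℕ) < j then elt (ε i.castSucc) else elt (ε i.succ)) =
    if ε j.castSucc && ε j.succ then 0 else
      f (List.ofFn (Fin.contractNth j.castSucc (· || ·) ε)) := by
  split_ifs with theta
  · exact g.map_coord_zero j (by simp [elt_mul_elt, theta])
  · rw [hfg]
    congr 1
    ext i : 1
    rcases lt_trichotomy i j with lt | rfl | gt
    · simp [lt.ne, Fin.contractNth, lt]
    · simp [Fin.contractNth, elt_mul_elt, theta]
    · simp [gt.ne', gt.not_gt, Fin.contractNth, Fin.val_ne_of_ne gt.ne']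

theorem Represents.apply_mul_last (hfg : Represents f g) (ε : Fin (p + 2) → Bool) :
    (g fun i => if (i : ℕ) = p then elt (ε (Fin.last (p + 1))) * elt (ε 0) else elt (ε i.succ)) =
      rightMul (ε 0) f (List.ofFn fun i => ε i.succ) := by
  rw [List.ofFn_succ', List.concat_eq_append, rightMul_append_singleton]
  split_ifs with theta
  · refine g.map_coord_zero (Fin.last p) ?_
    rw [if_pos (Fin.val_last p), mul_comm, elt_mul_elt]
    exact if_pos theta
  · have merged : (List.ofFn fun i : Fin p => ε i.castSucc.succ) ++ [ε 0 || ε (Fin.last p).succ] =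
        List.ofFn fun i : Fin (p + 1) =>
          if (i : ℕ) = p then ε 0 || ε (Fin.last (p + 1)) else ε i.succ := by
      rw [List.ofFn_succ', List.concat_eq_append]
      simp [fun i : Fin p => i.2.ne]
    rw [merged, hfg]
    congr 1
    ext i : 1
    split_ifs
    · rw [mul_comm, elt_mul_elt, if_neg (by simpa using theta)]
    · rfl

theorem Represents.cyclicGD_eq (hfg : Represents f g) (ε : Fin (p + 2) → Bool) :
    cyclicGD p g ε = hochschild f (List.ofFn ε) := by
  have wrap_sign : (wordSign (List.ofFn fun i => ε i.succ) : K) ^ (sdeg (ε 0) + 1) =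
      koszulSign (!ε 0) (List.ofFn fun i => ε i.succ) := by
    cases ε 0 <;> simp [sdeg, koszulSign, pow_two, wordSign_mul_self]
  rw [cyclicGD, List.ofFn_succ, hochschild_cons, ← List.ofFn_succ, ← sum_contractNth_eq_bar,
    ← wrap_sign, ← neg_one_pow_mul_sum_sdeg_tail, hfg.apply_mul_last]
  simp only [zsmul_eq_mul, hfg.apply_mul, Int.cast_pow, Int.cast_neg, Int.cast_one]

theorem isCyclicG_iff : IsCyclicG p g ↔ ∀ ε : Fin (p + 1) → Bool, g (fun i => elt (ε i)) =
    koszulSign (ε 0) (List.ofFn fun i : Fin p => ε i.succ) *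
      g fun i => elt (ε (finRotate (p + 1) i)) := by
  refine forall_congr' fun ε => ?_
  rw [zsmul_eq_mul, neg_one_pow_mul_sum_sdeg_tail]
  cases ε 0 <;> simp [sdeg, koszulSign]

theorem Represents.isCyclicG (hfg : Represents f g) (hf : f ∈ cyclicFunctions K) :
    IsCyclicG p g := by
  refine isCyclicG_iff.2 fun ε => ?_
  rw [← hfg, ← hfg fun i => ε (finRotate (p + 1) i), ofFn_comp_finRotate, List.ofFn_succ, hf]

/-- The extension by zero of the values of a cochain on tuples of basis elements to words of
arbitrary length. -/
noncomputable def wordFunction {m : ℕ} (g : MultilinearMap K (fun _ : Fin m => DualNumber K) K)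
    (w : List Bool) : K :=
  if w.length = m then g fun i => elt (w.getD i true) else 0

theorem represents_wordFunction {m : ℕ} (g : MultilinearMap K (fun _ : Fin m => DualNumber K) K) :
    Represents (wordFunction g) g := fun ε => by
  simp [wordFunction]

theorem wordFunction_of_length_ne {m : ℕ} {g : MultilinearMap K (fun _ : Fin m => DualNumber K) K}
    {w : List Bool} (hw : w.length ≠ m) : wordFunction g w = 0 := if_neg hw

theorem wordFunction_mem_cyclicFunctions (hg : IsCyclicG p g) :
    wordFunction g ∈ cyclicFunctions K := by
  intro a v
  by_cases hv : v.length = p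
  · subst hv
    have rotate := isCyclicG_iff.1 hg (Fin.cons a v.get)
    rw [← represents_wordFunction g, ← represents_wordFunction g fun i => _, ofFn_comp_finRotate,
      List.ofFn_succ] at rotate
    simpa using rotate
  · simp [wordFunction, hv]

theorem hochschild_wordFunction (hg : ∀ ε, cyclicGD p g ε = 0) :
    hochschild (wordFunction g) = 0 := by
  ext w
  by_cases hw : w.length = p + 2
  · obtain ⟨ε, rfl⟩ := exists_ofFn_eq hw
    rw [← (represents_wordFunction g).cyclicGD_eq, hg, Pi.zero_apply]
  · exact hochschild_eq_zero_of_length fun x hx => wordFunction_of_length_ne (by omega)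

theorem wordFunction_replicate {m n : ℕ} {b : Bool}
    {g : MultilinearMap K (fun _ : Fin m => DualNumber K) K} (hg : g (fun _ => elt b) = 0) :
    wordFunction g (List.replicate n b) = 0 := by
  rcases eq_or_ne n m with rfl | hn
  · rw [← List.ofFn_const, represents_wordFunction, hg]
  · exact wordFunction_of_length_ne (by simpa)

/-- The cyclic cocycles of degree `p`. -/
def cyclicCocycles (K : Type*) [Field K] (p : ℕ) :
    Submodule K (MultilinearMap K (fun _ : Fin (p + 1) => DualNumber K) K) where
  carrier := {g | IsCyclicG p g ∧ ∀ ε, cyclicGD p g ε = 0}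
  zero_mem' := by constructor <;> simp [IsCyclicG, cyclicGD]
  add_mem' := by
    rintro g h ⟨hg, hg'⟩ ⟨hh, hh'⟩
    refine ⟨fun ε => ?_, fun ε => ?_⟩
    · rw [add_apply, add_apply, hg ε, hh ε, smul_add]
    · have sum : Represents (wordFunction g + wordFunction h) (g + h) := fun ε => congrArg₂ (· + ·)
        (represents_wordFunction g ε) (represents_wordFunction h ε)
      rw [sum.cyclicGD_eq, map_add, hochschild_wordFunction hg', hochschild_wordFunction hh',
        add_zero, Pi.zero_apply]
  smul_mem' := by
    rintro c g ⟨hg, hg'⟩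
    refine ⟨fun ε => ?_, fun ε => ?_⟩
    · rw [smul_apply, smul_apply, hg ε, smul_comm]
    · have multiple : Represents (c • wordFunction g) (c • g) := fun ε =>
        congrArg (c • ·) (represents_wordFunction g ε)
      rw [multiple.cyclicGD_eq, map_smul, hochschild_wordFunction hg', smul_zero, Pi.zero_apply]

theorem lamP_elt {m : ℕ} (ε : Fin m → Bool) :
    lamP m (fun i => (elt (ε i) : DualNumber K)) = if ∀ i, ε i = false then 1 else 0 := by
  simp [lamP, fstL_elt, Fintype.prod_boole]

theorem lamM_elt {m : ℕ} (ε : Fin m → Bool) :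
    lamM m (fun i => (elt (ε i) : DualNumber K)) = if ∀ i, ε i = true then 1 else 0 := by
  simp [lamM, sndL_elt, Fintype.prod_boole]

theorem isCyclicG_lamP (n : ℕ) : IsCyclicG (2 * n) (lamP (k := K) (2 * n + 1)) := by
  intro ε
  have rotate : (∀ i, ε (finRotate (2 * n + 1) i) = false) ↔ ∀ i, ε i = false :=
    (finRotate _).forall_congr_right (q := fun i => ε i = false)
  simp only [lamP_elt, lamP_elt fun i => ε (finRotate _ i), rotate]
  split_ifs with constant
  · simp [constant, sdeg, Fin.sum_univ_succ]
  · rw [smul_zero]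

theorem isCyclicG_lamM (n : ℕ) : IsCyclicG n (lamM (k := K) (n + 1)) := by
  intro ε
  have rotate : (∀ i, ε (finRotate (n + 1) i) = true) ↔ ∀ i, ε i = true :=
    (finRotate _).forall_congr_right (q := fun i => ε i = true)
  simp only [lamM_elt, lamM_elt fun i => ε (finRotate _ i), rotate]
  split_ifs with constant
  · simp [constant, sdeg]
  · rw [smul_zero]

theorem eq_smul_lamP_add_smul_lamM_iff {g : MultilinearMap K (fun _ : Fin 1 => DualNumber K) K}
    {cd : K × K} : g = cd.1 • lamP 1 + cd.2 • lamM 1 ↔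
      cd = (g fun _ => elt false, g fun _ => elt true) := by
  constructor
  · rintro rfl
    simp [lamP_elt, lamM_elt]
  · rintro rfl
    refine Module.Basis.ext_multilinear (fun _ => eltBasis) fun ε => ?_
    obtain ⟨b, rfl⟩ : ∃ b, ε = fun _ => b := ⟨ε 0, funext fun i => by rw [Subsingleton.elim i 0]⟩
    simp only [eltBasis_apply]
    cases b <;> simp [lamP_elt, lamM_elt]

end Cochains

section Classification

variable {p : ℕ}

theorem mem_cyclicCocycles_of_constant_support
    {g : MultilinearMap k (fun _ : Fin (p + 1) => DualNumber k) k} (hg : IsCyclicG p g)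
    (support : ∀ ε : Fin (p + 1) → Bool, g (fun i => elt (ε i)) ≠ 0 → ∃ b, ε = fun _ => b) :
    g ∈ cyclicCocycles k p := by
  refine ⟨hg, fun ε => ?_⟩
  have f_mem := wordFunction_mem_cyclicFunctions hg
  have annihilated : blockCount k * wordFunction g = 0 := by
    ext w
    by_cases hw : w.length = p + 1
    · obtain ⟨ε, rfl⟩ := exists_ofFn_eq hw
      rw [Pi.mul_apply, represents_wordFunction]
      by_cases hε : g (fun i => elt (ε i)) = 0
      · simp [hε]
      · obtain ⟨b, rfl⟩ := support ε hε
        rw [blockCount, List.ofFn_const, cyclicDescents_replicate, Nat.cast_zero, zero_mul,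
          Pi.zero_apply]
    · simp [wordFunction_of_length_ne hw]
  rw [(represents_wordFunction g).cyclicGD_eq,
    hochschild_eq_zero_of_blockCount_mul f_mem (by rw [annihilated, map_zero]), Pi.zero_apply]

theorem lamP_mem_cyclicCocycles (n : ℕ) : lamP (2 * n + 1) ∈ cyclicCocycles k (2 * n) := by
  refine mem_cyclicCocycles_of_constant_support (isCyclicG_lamP n) fun ε hε => ⟨false, funext ?_⟩
  simpa [lamP_elt] using hε

theorem lamM_mem_cyclicCocycles (n : ℕ) : lamM (n + 1) ∈ cyclicCocycles k n := by
  refine mem_cyclicCocycles_of_constant_support (isCyclicG_lamM n) fun ε hε => ⟨true, funext ?_⟩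
  simpa [lamM_elt] using hε

theorem exists_cyclicGD_eq {g : MultilinearMap k (fun _ : Fin (p + 2) => DualNumber k) k}
    (hg : g ∈ cyclicCocycles k (p + 1)) (constant : ∀ b, g (fun _ => elt b) = 0) :
    ∃ h, IsCyclicG p h ∧ ∀ ε, g (fun i => elt (ε i)) = cyclicGD p h ε := by
  obtain ⟨f, f_mem, hf⟩ := exists_hochschild_eq (wordFunction_mem_cyclicFunctions hg.1)
    (hochschild_wordFunction hg.2) fun n b => wordFunction_replicate (constant b)
  obtain ⟨h, hfh⟩ := exists_represents (p + 1) f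
  refine ⟨h, hfh.isCyclicG f_mem, fun ε => ?_⟩
  rw [hfh.cyclicGD_eq, hf, represents_wordFunction]

theorem cyclicGD_const {h : MultilinearMap k (fun _ : Fin (p + 1) => DualNumber k) k}
    (hh : IsCyclicG p h) (b : Bool) : cyclicGD p h (fun _ => b) = 0 := by
  rw [(represents_wordFunction h).cyclicGD_eq, List.ofFn_const,
    hochschild_replicate (wordFunction_mem_cyclicFunctions hh)]

theorem cohomologous_iff {g g' : MultilinearMap k (fun _ : Fin (p + 2) => DualNumber k) k}
    (hg : g ∈ cyclicCocycles k (p + 1)) (hg' : g' ∈ cyclicCocycles k (p + 1)) :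
    (∃ h, IsCyclicG p h ∧ ∀ ε, g (fun i => elt (ε i)) = g' (fun i => elt (ε i)) + cyclicGD p h ε) ↔
      ∀ b, g (fun _ => elt b) = g' (fun _ => elt b) := by
  constructor
  · rintro ⟨h, hh, eq⟩ b
    simpa [cyclicGD_const hh] using eq fun _ => b
  · intro eq
    obtain ⟨h, hh, sub_eq⟩ := exists_cyclicGD_eq (Submodule.sub_mem _ hg hg') fun b => by
      rw [sub_apply, eq, sub_self]
    exact ⟨h, hh, fun ε => sub_eq_iff_eq_add'.1 (sub_eq ε)⟩

theorem even_cohomologous_iff {n : ℕ}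
    {g : MultilinearMap k (fun _ : Fin (2 * n + 3) => DualNumber k) k}
    (hg : g ∈ cyclicCocycles k (2 * n + 2)) (cd : k × k) :
    (∃ h, IsCyclicG (2 * n + 1) h ∧ ∀ ε, g (fun i => elt (ε i)) =
      cd.1 * lamP (2 * n + 3) (fun i => elt (ε i)) + cd.2 * lamM (2 * n + 3) (fun i => elt (ε i))
        + cyclicGD (2 * n + 1) h ε) ↔ cd = (g fun _ => elt false, g fun _ => elt true) := by
  have model : cd.1 • lamP (2 * n + 3) + cd.2 • lamM (2 * n + 3) ∈ cyclicCocycles k (2 * n + 2) :=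
    Submodule.add_mem _ (Submodule.smul_mem _ _ (lamP_mem_cyclicCocycles (n + 1)))
      (Submodule.smul_mem _ _ (lamM_mem_cyclicCocycles _))
  refine (cohomologous_iff hg model).trans ?_
  simp [lamP_elt, lamM_elt, Prod.ext_iff, eq_comm]

theorem odd_cohomologous_iff {n : ℕ}
    {g : MultilinearMap k (fun _ : Fin (2 * n + 2) => DualNumber k) k}
    (hg : g ∈ cyclicCocycles k (2 * n + 1)) (c : k) :
    (∃ h, IsCyclicG (2 * n) h ∧ ∀ ε, g (fun i => elt (ε i)) =
      c * lamM (2 * n + 2) (fun i => elt (ε i)) + cyclicGD (2 * n) h ε) ↔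
        c = g fun _ => elt true := by
  have model : c • lamM (2 * n + 2) ∈ cyclicCocycles k (2 * n + 1) :=
    Submodule.smul_mem _ _ (lamM_mem_cyclicCocycles _)
  have apply_one : g (fun _ => elt false) = 0 := by
    rw [← represents_wordFunction g, List.ofFn_const]
    exact apply_replicate_one_of_odd (wordFunction_mem_cyclicFunctions hg.1) (by simp)
  refine (cohomologous_iff hg model).trans ?_
  simp [lamM_elt, apply_one, eq_comm]

end Classification

end GrassmannCyclic

/-- the cyclic cohomology of the Grassmann algebra:
`HC^{2n} ≅ k²`, `HC^{2n+1} ≅ k`, with basis `λ⁺, λ⁻`. -/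
theorem grassmann_cyclic_cohomology :
    -- λ⁺ is a cyclic cocycle in each even degree 2n
    (∀ n : ℕ, IsCyclicG (k := k) (2 * n) (lamP (k := k) (2 * n + 1))
      ∧ ∀ ε : Fin (2 * n + 2) → Bool, cyclicGD (k := k) (2 * n) (lamP (k := k) (2 * n + 1)) ε = 0)
    -- λ⁻ is a cyclic cocycle in each degree n
    ∧ (∀ n : ℕ, IsCyclicG (k := k) n (lamM (k := k) (n + 1))
      ∧ ∀ ε : Fin (n + 2) → Bool, cyclicGD (k := k) n (lamM (k := k) (n + 1)) ε = 0)
    -- HC⁰ ≅ k²: no coboundaries in degree 0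
    ∧ (∀ g : MultilinearMap k (fun _ : Fin 1 => DualNumber k) k,
        IsCyclicG (k := k) 0 g → (∀ ε : Fin 2 → Bool, cyclicGD (k := k) 0 g ε = 0) →
        ∃! cd : k × k, g = cd.1 • lamP (k := k) 1 + cd.2 • lamM (k := k) 1)
    -- HC^{2n+2} ≅ k² with basis the classes of λ⁺, λ⁻
    ∧ (∀ (n : ℕ) (g : MultilinearMap k (fun _ : Fin (2 * n + 3) => DualNumber k) k),
        IsCyclicG (k := k) (2 * n + 2) g →
        (∀ ε : Fin (2 * n + 4) → Bool, cyclicGD (k := k) (2 * n + 2) g ε = 0) →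
        ∃! cd : k × k,
          ∃ h : MultilinearMap k (fun _ : Fin (2 * n + 2) => DualNumber k) k,
            IsCyclicG (k := k) (2 * n + 1) h ∧
            ∀ ε : Fin (2 * n + 3) → Bool,
              g (fun i => elt (ε i))
                = cd.1 * lamP (k := k) (2 * n + 3) (fun i => elt (ε i))
                  + cd.2 * lamM (k := k) (2 * n + 3) (fun i => elt (ε i))
                  + cyclicGD (k := k) (2 * n + 1) h ε)
    -- HC^{2n+1} ≅ k with basis the class of λ⁻
    ∧ (∀ (n : ℕ) (g : MultilinearMap k (fun _ : Fin (2 * n + 2) => DualNumber k) k),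
        IsCyclicG (k := k) (2 * n + 1) g →
        (∀ ε : Fin (2 * n + 3) → Bool, cyclicGD (k := k) (2 * n + 1) g ε = 0) →
        ∃! c : k,
          ∃ h : MultilinearMap k (fun _ : Fin (2 * n + 1) => DualNumber k) k,
            IsCyclicG (k := k) (2 * n) h ∧
            ∀ ε : Fin (2 * n + 2) → Bool,
              g (fun i => elt (ε i))
                = c * lamM (k := k) (2 * n + 2) (fun i => elt (ε i))
                  + cyclicGD (k := k) (2 * n) h ε) := by
  open GrassmannCyclic in
  refine ⟨fun n => lamP_mem_cyclicCocycles n, fun n => lamM_mem_cyclicCocycles n,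
    fun g _ _ => ?_, fun n g hg closed => ?_, fun n g hg closed => ?_⟩
  · simp only [eq_smul_lamP_add_smul_lamM_iff, existsUnique_eq]
  · simp only [even_cohomologous_iff ⟨hg, closed⟩, existsUnique_eq]
  · simp only [odd_cohomologous_iff ⟨hg, closed⟩, existsUnique_eq]
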